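/- arXiv:2104.11053 — 2 statements merged into one kernel-verified Lean document; each statement's English description precedes it below -/
import Mathlib

section
/- For t > 0 and reals b₁, b₂: (i) F_C equals the pure F₅-form F⁵(x,y,z) = (θ*₀/2)[x¹(y⁰z² + y²z⁰) + x²(y⁰z¹ + y¹z⁰)] for some real θ*₀ if and only if b₁ = b₂ = 0 (i.e. the cone is an F₅-manifold iff the underlying surface is a W₀-manifold, θ′ = 0); (ii) for no reals θ₁, θ₂ does F_C equal the pure F₁-form F¹(x,y,z) = (x¹θ₁ − x²θ₂)(y¹z¹ − y²z²) (the cone can never belong to F₁). -/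
noncomputable section

/-- `V = ℝ³` with standard basis and inner product. -/
abbrev V3 : Type := Fin 3 → ℝ

/-- The standard basis `e₀, e₁, e₂` of `V3`. -/
def e3 (i : Fin 3) : V3 := Pi.single i 1

/-- The standard inner product `g` on `V3`. -/
def g3 (x y : V3) : ℝ := ∑ i, x i * y i

/-- The paracontact endomorphism `φ`: `φe₀ = 0`, `φe₁ = e₂`, `φe₂ = e₁`. -/
def phi3 (x : V3) : V3 := ![0, x 2, x 1]

/-- A map `F : V×V×V → ℝ` is trilinear. -/
def IsTrilinear (F : V3 → V3 → V3 → ℝ) : Prop :=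
  (∀ (c : ℝ) (x x' y z : V3), F (c • x + x') y z = c * F x y z + F x' y z) ∧
  (∀ (c : ℝ) (x y y' z : V3), F x (c • y + y') z = c * F x y z + F x y' z) ∧
  (∀ (c : ℝ) (x y z z' : V3), F x y (c • z + z') = c * F x y z + F x y z')

/-- The components of the fundamental tensor `F_C` of the cone `C(N)`. -/
def FCcomp (t b₁ b₂ : ℝ) : Fin 3 → Fin 3 → Fin 3 → ℝ :=
  ![![![0, 0, 0], ![0, 0, 0], ![0, 0, 0]],
    ![![0, 0, -1 / t], ![0, b₁, 0], ![-1 / t, 0, -b₁]],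
    ![![0, -1 / t, 0], ![-1 / t, -b₂, 0], ![0, 0, b₂]]]

/-!
The two pure forms `F¹(θ₁, θ₂)` and `F⁵(θ)` jointly determine their parameters, and comparing
components on the standard basis gives `F_C = F¹(b₁, b₂) + F⁵(-2 / t)`. So `F_C` is of pure type
`F₅` exactly when its `F₁`-part vanishes, and never of pure type `F₁` because its `F₅`-part does
not vanish.
-/

section LinearMap

variable {R M N ι : Type*} [Semiring R] [AddCommMonoid M] [Module R M]

theorem isLinearMap_of_map_smul_add [AddCancelCommMonoid N] [Module R N] {f : M → N}
    (hf : ∀ (c : R) (x y : M), f (c • x + y) = c • f x + f y) : IsLinearMap R f where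
  map_add x y := by simpa only [one_smul] using hf 1 x y
  map_smul c x := by
    have map_zero : f 0 = 0 := by simpa only [one_smul, add_zero, left_eq_add] using hf 1 0 0
    simpa only [map_zero, add_zero] using hf c x 0

theorem eq_of_isLinearMap_of_basis [AddCommMonoid N] [Module R N] (b : Module.Basis ι R M)
    {f g : M → N} (hf : IsLinearMap R f) (hg : IsLinearMap R g) (h : ∀ i, f (b i) = g (b i)) :
    f = g :=
  congrArg DFunLike.coe (b.ext (f₁ := hf.mk' f) (f₂ := hg.mk' g) h)

end LinearMap

theorem eq_of_isLinearMap_of_e3 {N : Type*} [AddCommMonoid N] [Module ℝ N] {f g : V3 → N}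
    (hf : IsLinearMap ℝ f) (hg : IsLinearMap ℝ g) (h : ∀ i, f (e3 i) = g (e3 i)) : f = g :=
  eq_of_isLinearMap_of_basis (Pi.basisFun ℝ (Fin 3)) hf hg fun i ↦ by simpa [e3] using h i

namespace IsTrilinear

variable {F G : V3 → V3 → V3 → ℝ}

theorem isLinearMap_fst (hF : IsTrilinear F) (y z : V3) : IsLinearMap ℝ (F · y z) :=
  isLinearMap_of_map_smul_add fun c x x' ↦ hF.1 c x x' y z

theorem isLinearMap_snd (hF : IsTrilinear F) (x z : V3) : IsLinearMap ℝ (F x · z) :=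
  isLinearMap_of_map_smul_add fun c y y' ↦ hF.2.1 c x y y' z

theorem isLinearMap_thd (hF : IsTrilinear F) (x y : V3) : IsLinearMap ℝ (F x y) :=
  isLinearMap_of_map_smul_add (hF.2.2 · x y)

theorem ext_e3 (hF : IsTrilinear F) (hG : IsTrilinear G)
    (h : ∀ i j k, F (e3 i) (e3 j) (e3 k) = G (e3 i) (e3 j) (e3 k)) : F = G := by
  funext x y z
  have h₃ (i j) : F (e3 i) (e3 j) z = G (e3 i) (e3 j) z :=
    congrFun (eq_of_isLinearMap_of_e3 (hF.isLinearMap_thd _ _) (hG.isLinearMap_thd _ _) (h i j)) z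
  have h₂ (i) : F (e3 i) y z = G (e3 i) y z :=
    congrFun (eq_of_isLinearMap_of_e3 (hF.isLinearMap_snd _ _) (hG.isLinearMap_snd _ _) (h₃ i)) y
  exact congrFun (eq_of_isLinearMap_of_e3 (hF.isLinearMap_fst _ _) (hG.isLinearMap_fst _ _) h₂) x

theorem add (hF : IsTrilinear F) (hG : IsTrilinear G) : IsTrilinear (F + G) := by
  obtain ⟨hF₁, hF₂, hF₃⟩ := hF
  obtain ⟨hG₁, hG₂, hG₃⟩ := hG
  simp only [IsTrilinear, Pi.add_apply, hF₁, hF₂, hF₃, hG₁, hG₂, hG₃]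
  refine ⟨?_, ?_, ?_⟩ <;> intros <;> ring

end IsTrilinear

/-- The pure `F₁`-form `F¹` with parameters `θ₁`, `θ₂`. -/
def f1Form (θ₁ θ₂ : ℝ) (x y z : V3) : ℝ :=
  (x 1 * θ₁ - x 2 * θ₂) * (y 1 * z 1 - y 2 * z 2)

/-- The pure `F₅`-form `F⁵` with parameter `θ`, the `θ*₀` of the statement. -/
def f5Form (θ : ℝ) (x y z : V3) : ℝ :=
  θ / 2 * (x 1 * (y 0 * z 2 + y 2 * z 0) + x 2 * (y 0 * z 1 + y 1 * z 0))

theorem isTrilinear_f1Form (θ₁ θ₂ : ℝ) : IsTrilinear (f1Form θ₁ θ₂) := by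
  simp only [IsTrilinear, f1Form, Pi.add_apply, Pi.smul_apply, smul_eq_mul]
  refine ⟨?_, ?_, ?_⟩ <;> intros <;> ring

theorem isTrilinear_f5Form (θ : ℝ) : IsTrilinear (f5Form θ) := by
  simp only [IsTrilinear, f5Form, Pi.add_apply, Pi.smul_apply, smul_eq_mul]
  refine ⟨?_, ?_, ?_⟩ <;> intros <;> ring

theorem f1Form_zero_zero : f1Form 0 0 = 0 := by
  funext x y z
  simp [f1Form]

theorem f5Form_zero : f5Form 0 = 0 := by
  funext x y z
  simp [f5Form]

theorem f1Form_add_f5Form_inj {θ₁ θ₂ θ η₁ η₂ η : ℝ} :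
    f1Form θ₁ θ₂ + f5Form θ = f1Form η₁ η₂ + f5Form η ↔ θ₁ = η₁ ∧ θ₂ = η₂ ∧ θ = η := by
  refine ⟨fun h ↦ ?_, by rintro ⟨rfl, rfl, rfl⟩; rfl⟩
  have h_apply (i j k) := congr($h (e3 i) (e3 j) (e3 k))
  simp only [Pi.add_apply] at h_apply
  exact ⟨by simpa [f1Form, f5Form, e3] using h_apply 1 1 1,
    by simpa [f1Form, f5Form, e3] using h_apply 2 2 2,
    by simpa [f1Form, f5Form, e3] using h_apply 1 0 2⟩

theorem f1Form_add_f5Form_apply_e3 (t b₁ b₂ : ℝ) (i j k : Fin 3) :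
    (f1Form b₁ b₂ + f5Form (-2 / t)) (e3 i) (e3 j) (e3 k) = FCcomp t b₁ b₂ i j k := by
  have half_coeff : -2 / t / 2 = -1 / t := by ring
  fin_cases i <;> fin_cases j <;> fin_cases k <;>
    simp [f1Form, f5Form, e3, FCcomp, half_coeff]

theorem IsTrilinear.eq_f1Form_add_f5Form {F : V3 → V3 → V3 → ℝ} (hF : IsTrilinear F)
    {t b₁ b₂ : ℝ} (hcomp : ∀ i j k, F (e3 i) (e3 j) (e3 k) = FCcomp t b₁ b₂ i j k) :
    F = f1Form b₁ b₂ + f5Form (-2 / t) :=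
  hF.ext_e3 ((isTrilinear_f1Form b₁ b₂).add (isTrilinear_f5Form (-2 / t))) fun i j k ↦
    (hcomp i j k).trans (f1Form_add_f5Form_apply_e3 t b₁ b₂ i j k).symm

/-- (i) The cone is an `F₅`-manifold iff the underlying surface is a `W₀`-manifold
(`θ′ = 0`, i.e. `b₁ = b₂ = 0`); (ii) the cone can never belong to `F₁`. -/
theorem statement4 (t b₁ b₂ : ℝ) (ht : 0 < t)
    (F : V3 → V3 → V3 → ℝ) (hlin : IsTrilinear F)
    (hsym : ∀ x y z, F x y z = F x z y)
    (hcomp : ∀ i j k, F (e3 i) (e3 j) (e3 k) = FCcomp t b₁ b₂ i j k) :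
    ((∃ θs₀ : ℝ, ∀ x y z, F x y z =
        θs₀ / 2 * (x 1 * (y 0 * z 2 + y 2 * z 0) + x 2 * (y 0 * z 1 + y 1 * z 0)))
      ↔ (b₁ = 0 ∧ b₂ = 0)) ∧
    ¬ (∃ θ₁ θ₂ : ℝ, ∀ x y z, F x y z =
        (x 1 * θ₁ - x 2 * θ₂) * (y 1 * z 1 - y 2 * z 2)) := by
  have hF := hlin.eq_f1Form_add_f5Form hcomp
  have eq_f5Form_iff (θ : ℝ) : F = f5Form θ ↔ b₁ = 0 ∧ b₂ = 0 ∧ -2 / t = θ := by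
    rw [hF, ← f1Form_add_f5Form_inj, f1Form_zero_zero, zero_add]
  have eq_f1Form_iff (θ₁ θ₂ : ℝ) : F = f1Form θ₁ θ₂ ↔ b₁ = θ₁ ∧ b₂ = θ₂ ∧ -2 / t = 0 := by
    rw [hF, ← f1Form_add_f5Form_inj, f5Form_zero, add_zero]
  constructor
  · calc (∃ θ, ∀ x y z, F x y z = f5Form θ x y z)
      _ ↔ ∃ θ, F = f5Form θ := by simp only [funext_iff]
      _ ↔ b₁ = 0 ∧ b₂ = 0 := by simp only [eq_f5Form_iff, exists_and_left, exists_eq', and_true]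
  · rintro ⟨θ₁, θ₂, h⟩
    obtain ⟨-, -, f5_coeff_eq_zero⟩ := (eq_f1Form_iff θ₁ θ₂).1 (funext₃ h)
    exact div_ne_zero (by norm_num) ht.ne' f5_coeff_eq_zero
end
end

section
/- Let k′ ∈ ℝ, t > 0, and let R_S be the curvature-like tensor with parameters a, b₁, b₂, with Ricci tensor ρ and associated Ricci tensor ρ*. Then the following are equivalent: (1) b₁ = b₂ = 0 and a = k′cosh(2t) + 1 (which holds exactly when the underlying surface is a W₀-manifold); (2) ρ = k′cosh(2t)·g − (2 + k′cosh(2t))·η⊗η; (3) ρ* = −(1 + k′cosh(2t))·(g̃ − η⊗η), where g̃(x,y) = g(x,φy) + η(x)η(y). -/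
noncomputable section

/-- A map `R : V⁴ → ℝ` is 4-linear. -/
def IsQuadrilinear (R : V3 → V3 → V3 → V3 → ℝ) : Prop :=
  (∀ (c : ℝ) (x x' y z w : V3), R (c • x + x') y z w = c * R x y z w + R x' y z w) ∧
  (∀ (c : ℝ) (x y y' z w : V3), R x (c • y + y') z w = c * R x y z w + R x y' z w) ∧
  (∀ (c : ℝ) (x y z z' w : V3), R x y (c • z + z') w = c * R x y z w + R x y z' w) ∧
  (∀ (c : ℝ) (x y z w w' : V3), R x y z (c • w + w') = c * R x y z w + R x y z w')

/-- A curvature-like tensor: 4-linear with the standard curvature symmetries. -/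
def CurvatureLike (R : V3 → V3 → V3 → V3 → ℝ) : Prop :=
  IsQuadrilinear R ∧
  (∀ x y z w, R x y z w = - R y x z w) ∧
  (∀ x y z w, R x y z w = - R x y w z) ∧
  (∀ x y z w, R x y z w = R z w x y)

/-!
Both `ρ` and `ρ*` are traces `(y, z) ↦ ∑ i, R (eᵢ, y, z, A eᵢ)`, with `A = id` and `A = φ`. Since
`A` is self-adjoint, the pair symmetry of `R` makes such a trace a symmetric bilinear form, hence
it is a symmetric `3 × 3` matrix whose entries are components of `R`. Each of the tensor equations
(2) and (3) is then an equality of two symmetric matrices, which reads off `a`, `b₁` and `b₂`.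
-/

theorem isLinearMap_of_map_smul_add_s13 {S M N : Type*} [Semiring S] [AddCommMonoid M]
    [AddCommGroup N] [Module S M] [Module S N] {f : M → N}
    (hf : ∀ (c : S) (x x' : M), f (c • x + x') = c • f x + f x') : IsLinearMap S f := by
  have map_zero : f 0 = 0 := by simpa using hf 1 0 0
  exact ⟨fun x x' => by simpa using hf 1 x x', fun c x => by simpa [map_zero] using hf c x 0⟩

theorem forall_apply_eq_iff_toMatrix'_eq {n S : Type*} [Fintype n] [DecidableEq n]
    [CommSemiring S] {B : LinearMap.BilinForm S (n → S)} {M : Matrix n n S}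
    {f : (n → S) → (n → S) → S} (hf : ∀ y z, f y z = M.toBilin' y z) :
    (∀ y z, B y z = f y z) ↔ B.toMatrix' = M := by
  simp only [hf, ← LinearMap.ext_iff₂, ← Matrix.toBilin'.injective.eq_iff,
    Matrix.toBilin'_toMatrix']

theorem eta_fin_three_of_isSymm {α : Type*} {M : Matrix (Fin 3) (Fin 3) α} (hM : M.IsSymm) :
    M = !![M 0 0, M 0 1, M 0 2; M 0 1, M 1 1, M 1 2; M 0 2, M 1 2, M 2 2] := by
  conv_lhs => rw [M.eta_fin_three, hM.apply 0 1, hM.apply 0 2, hM.apply 1 2]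

theorem phi3_e3_zero : phi3 (e3 0) = 0 := by
  ext i; fin_cases i <;> simp [phi3, e3]

theorem phi3_e3_one : phi3 (e3 1) = e3 2 := by
  ext i; fin_cases i <;> simp [phi3, e3]

theorem phi3_e3_two : phi3 (e3 2) = e3 1 := by
  ext i; fin_cases i <;> simp [phi3, e3]

theorem phi3_e3_apply_comm (i j : Fin 3) : phi3 (e3 i) j = phi3 (e3 j) i := by
  fin_cases i <;> fin_cases j <;> simp [phi3, e3]

theorem e3_apply_comm (i j : Fin 3) : e3 i j = e3 j i :=
  Pi.single_comm i 1 j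

namespace IsQuadrilinear

variable {R : V3 → V3 → V3 → V3 → ℝ}

theorem isLinearMap_second (hR : IsQuadrilinear R) (x z w : V3) :
    IsLinearMap ℝ fun y => R x y z w :=
  isLinearMap_of_map_smul_add_s13 fun c y y' => hR.2.1 c x y y' z w

theorem isLinearMap_third (hR : IsQuadrilinear R) (x y w : V3) :
    IsLinearMap ℝ fun z => R x y z w :=
  isLinearMap_of_map_smul_add_s13 fun c z z' => hR.2.2.1 c x y z z' w

theorem isLinearMap_fourth (hR : IsQuadrilinear R) (x y z : V3) :
    IsLinearMap ℝ fun w => R x y z w :=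
  isLinearMap_of_map_smul_add_s13 fun c w w' => hR.2.2.2 c x y z w w'

theorem apply_eq_sum_fourth (hR : IsQuadrilinear R) (x y z w : V3) :
    R x y z w = ∑ i, w i * R x y z (e3 i) := by
  have h := ((hR.isLinearMap_fourth x y z).mk' _).pi_apply_eq_sum_univ w
  have indicator_eq_e3 (i : Fin 3) : (fun j => if i = j then (1 : ℝ) else 0) = e3 i := by
    ext j
    simp only [e3, Pi.single_apply, eq_comm]
  simpa only [IsLinearMap.mk'_apply, smul_eq_mul, indicator_eq_e3] using h

/-- The trace `(y, z) ↦ ∑ i, R (eᵢ, y, z, A eᵢ)` of `R` twisted by an endomorphism `A`: the Ricci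
tensor `ρ` for `A = id`, and the associated Ricci tensor `ρ*` for `A = φ`. Only the values of `A`
on the standard basis matter, so `A` is not required to be linear. -/
def twistedRicci (hR : IsQuadrilinear R) (A : V3 → V3) : LinearMap.BilinForm ℝ V3 :=
  LinearMap.mk₂ ℝ (fun y z => ∑ i, R (e3 i) y z (A (e3 i)))
    (fun y y' z => by
      simp only [(hR.isLinearMap_second _ z _).map_add y y', Finset.sum_add_distrib])
    (fun c y z => by
      simp only [(hR.isLinearMap_second _ z _).map_smul c y, Finset.smul_sum])
    (fun y z z' => by
      simp only [(hR.isLinearMap_third _ y _).map_add z z', Finset.sum_add_distrib])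
    (fun c y z => by
      simp only [(hR.isLinearMap_third _ y _).map_smul c z, Finset.smul_sum])

theorem twistedRicci_apply (hR : IsQuadrilinear R) (A : V3 → V3) (y z : V3) :
    hR.twistedRicci A y z = ∑ i, R (e3 i) y z (A (e3 i)) :=
  rfl

theorem toMatrix'_twistedRicci_apply (hR : IsQuadrilinear R) (A : V3 → V3) (j k : Fin 3) :
    (hR.twistedRicci A).toMatrix' j k =
      R (e3 0) (e3 j) (e3 k) (A (e3 0)) + R (e3 1) (e3 j) (e3 k) (A (e3 1)) +
        R (e3 2) (e3 j) (e3 k) (A (e3 2)) := by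
  rw [LinearMap.BilinForm.toMatrix'_apply, ← e3, ← e3, twistedRicci_apply, Fin.sum_univ_three]

end IsQuadrilinear

namespace CurvatureLike

variable {R : V3 → V3 → V3 → V3 → ℝ}

theorem swap_left (hR : CurvatureLike R) (x y z w : V3) : R x y z w = -R y x z w :=
  hR.2.1 x y z w

theorem swap_right (hR : CurvatureLike R) (x y z w : V3) : R x y z w = -R x y w z :=
  hR.2.2.1 x y z w

theorem swap_pairs (hR : CurvatureLike R) (x y z w : V3) : R x y z w = R z w x y :=
  hR.2.2.2 x y z w

theorem reverse (hR : CurvatureLike R) (x y z w : V3) : R x y z w = R w z y x := by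
  rw [hR.swap_pairs, hR.swap_left, hR.swap_right, neg_neg]

theorem self_left (hR : CurvatureLike R) (x z w : V3) : R x x z w = 0 :=
  self_eq_neg.mp (hR.swap_left x x z w)

theorem self_right (hR : CurvatureLike R) (x y z : V3) : R x y z z = 0 :=
  self_eq_neg.mp (hR.swap_right x y z z)

theorem zero_right (hR : CurvatureLike R) (x y z : V3) : R x y z 0 = 0 :=
  (hR.1.isLinearMap_fourth x y z).map_zero

theorem isSymm_twistedRicci (hR : CurvatureLike R) {A : V3 → V3}
    (hA : ∀ i j, A (e3 i) j = A (e3 j) i) : (hR.1.twistedRicci A).IsSymm := by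
  refine ⟨fun y z => ?_⟩
  calc ∑ i, R (e3 i) y z (A (e3 i))
      = ∑ i, ∑ j, A (e3 i) j * R (e3 i) y z (e3 j) := by
        simp only [← hR.1.apply_eq_sum_fourth]
    _ = ∑ i, ∑ j, A (e3 j) i * R (e3 j) z y (e3 i) := by
        simp only [hA, hR.reverse _ y z]
    _ = ∑ j, ∑ i, A (e3 j) i * R (e3 j) z y (e3 i) := Finset.sum_comm
    _ = ∑ j, R (e3 j) z y (A (e3 j)) := by
        simp only [← hR.1.apply_eq_sum_fourth]

theorem toMatrix'_twistedRicci_id (hR : CurvatureLike R) :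
    (hR.1.twistedRicci id).toMatrix' =
      !![R (e3 0) (e3 1) (e3 1) (e3 0) + R (e3 0) (e3 2) (e3 2) (e3 0),
          R (e3 1) (e3 2) (e3 2) (e3 0), -R (e3 1) (e3 2) (e3 1) (e3 0);
        R (e3 1) (e3 2) (e3 2) (e3 0),
          R (e3 0) (e3 1) (e3 1) (e3 0) + R (e3 1) (e3 2) (e3 2) (e3 1),
          -R (e3 0) (e3 1) (e3 0) (e3 2);
        -R (e3 1) (e3 2) (e3 1) (e3 0), -R (e3 0) (e3 1) (e3 0) (e3 2),
          R (e3 0) (e3 2) (e3 2) (e3 0) + R (e3 1) (e3 2) (e3 2) (e3 1)] := by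
  have isSymm := LinearMap.BilinForm.isSymm_toMatrix'_iff_isSymm.mpr
    (hR.isSymm_twistedRicci (A := id) e3_apply_comm)
  rw [eta_fin_three_of_isSymm isSymm]
  simp only [hR.1.toMatrix'_twistedRicci_apply, id_eq, hR.self_left, hR.self_right, zero_add,
    add_zero]
  rw [hR.swap_pairs (e3 1) (e3 0) (e3 0) (e3 1), hR.swap_pairs (e3 2) (e3 0) (e3 0) (e3 2),
    hR.swap_pairs (e3 2) (e3 1) (e3 1) (e3 2), hR.swap_pairs (e3 2) (e3 0) (e3 1) (e3 2),
    hR.swap_pairs (e3 1) (e3 0) (e3 2) (e3 1), hR.swap_left (e3 2) (e3 1) (e3 1) (e3 0),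
    hR.swap_right (e3 0) (e3 1) (e3 2) (e3 0)]

theorem toMatrix'_twistedRicci_phi3 (hR : CurvatureLike R) :
    (hR.1.twistedRicci phi3).toMatrix' =
      !![-2 * R (e3 0) (e3 1) (e3 0) (e3 2),
          R (e3 1) (e3 2) (e3 1) (e3 0), -R (e3 1) (e3 2) (e3 2) (e3 0);
        R (e3 1) (e3 2) (e3 1) (e3 0), 0, -R (e3 1) (e3 2) (e3 2) (e3 1);
        -R (e3 1) (e3 2) (e3 2) (e3 0), -R (e3 1) (e3 2) (e3 2) (e3 1), 0] := by
  have isSymm := LinearMap.BilinForm.isSymm_toMatrix'_iff_isSymm.mpr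
    (hR.isSymm_twistedRicci phi3_e3_apply_comm)
  rw [eta_fin_three_of_isSymm isSymm]
  simp only [hR.1.toMatrix'_twistedRicci_apply, phi3_e3_zero, phi3_e3_one, phi3_e3_two,
    hR.zero_right, hR.self_left, hR.self_right, zero_add, add_zero]
  rw [hR.reverse (e3 2) (e3 0) (e3 0) (e3 1), hR.swap_left (e3 1) (e3 0) (e3 0) (e3 2),
    hR.swap_pairs (e3 1) (e3 0) (e3 1) (e3 2), hR.swap_pairs (e3 2) (e3 0) (e3 2) (e3 1),
    hR.swap_left (e3 2) (e3 1) (e3 2) (e3 0), hR.swap_left (e3 2) (e3 1) (e3 2) (e3 1),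
    ← two_mul, mul_neg, ← neg_mul]

end CurvatureLike

theorem mul_g3_sub_eq_toBilin' (c d : ℝ) (y z : V3) :
    c * g3 y z - d * (y 0 * z 0) =
      Matrix.toBilin' !![c - d, 0, 0; 0, c, 0; 0, 0, c] y z := by
  simp only [g3, Matrix.toBilin'_apply, Fin.sum_univ_three, Matrix.of_apply, Matrix.cons_val',
    Matrix.cons_val_fin_one, Matrix.cons_val]
  ring

theorem mul_g3_phi3_eq_toBilin' (c : ℝ) (y z : V3) :
    c * g3 y (phi3 z) = Matrix.toBilin' !![0, 0, 0; 0, 0, c; 0, c, 0] y z := by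
  simp only [g3, phi3, Matrix.toBilin'_apply, Fin.sum_univ_three, Matrix.of_apply,
    Matrix.cons_val', Matrix.cons_val_fin_one, Matrix.cons_val]
  ring

/-- For the curvature tensor `R_S` of the hyperbolic extension `S(N)` of a 2-dimensional
paracomplex Riemannian space-form `N` of curvature `k′`, the following are equivalent:
(1) `b₁ = b₂ = 0` and `a = k′cosh(2t) + 1` (i.e. `N` is a `W₀`-manifold);
(2) `ρ = k′cosh(2t)·g − (2 + k′cosh(2t))·η⊗η`;
(3) `ρ* = −(1 + k′cosh(2t))·(g̃ − η⊗η)`, where `g̃(x,y) = g(x,φy) + η(x)η(y)`. -/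
theorem statement13 (k' t a b₁ b₂ : ℝ) (ht : 0 < t)
    (R : V3 → V3 → V3 → V3 → ℝ)
    (hR : CurvatureLike R)
    (h1 : R (e3 1) (e3 2) (e3 2) (e3 1) = a)
    (h2 : R (e3 1) (e3 2) (e3 1) (e3 0) = -b₂)
    (h3 : R (e3 1) (e3 2) (e3 2) (e3 0) = b₁)
    (h4 : R (e3 0) (e3 1) (e3 1) (e3 0) = -1)
    (h5 : R (e3 0) (e3 2) (e3 2) (e3 0) = -1)
    (h6 : R (e3 0) (e3 1) (e3 0) (e3 2) = 0)
    (ρ ρs : V3 → V3 → ℝ)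
    (hρ : ∀ y z, ρ y z = ∑ i, R (e3 i) y z (e3 i))
    (hρs : ∀ y z, ρs y z = ∑ i, R (e3 i) y z (phi3 (e3 i))) :
    (((b₁ = 0 ∧ b₂ = 0) ∧ a = k' * Real.cosh (2 * t) + 1) ↔
      (∀ y z, ρ y z =
        k' * Real.cosh (2 * t) * g3 y z
          - (2 + k' * Real.cosh (2 * t)) * (y 0 * z 0))) ∧
    (((b₁ = 0 ∧ b₂ = 0) ∧ a = k' * Real.cosh (2 * t) + 1) ↔
      (∀ y z, ρs y z =
        -(1 + k' * Real.cosh (2 * t)) * ((g3 y (phi3 z) + y 0 * z 0) - y 0 * z 0))) := by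
  have ricci_eq (y z) : ρ y z = hR.1.twistedRicci id y z := hρ y z
  have ricciStar_eq (y z) : ρs y z = hR.1.twistedRicci phi3 y z := hρs y z
  simp only [ricci_eq, ricciStar_eq, add_sub_cancel_right]
  rw [forall_apply_eq_iff_toMatrix'_eq (mul_g3_sub_eq_toBilin' _ _),
    forall_apply_eq_iff_toMatrix'_eq (mul_g3_phi3_eq_toBilin' _),
    hR.toMatrix'_twistedRicci_id, hR.toMatrix'_twistedRicci_phi3, h1, h2, h3, h4, h5, h6]
  simp only [EmbeddingLike.apply_eq_iff_eq, Matrix.vecCons_inj, and_true]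
  constructor <;> grind
end
end
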